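/- For every positive integer r, if G is a (2,2r+1)-biregular bipartite graph, then r + 2 ≤ š(G) ≤ 2r + 2. -/

import Mathlib

open SimpleGraph Finset

/-- A proper edge coloring of `G` with colors in `ℕ`: distinct edges of `G`
sharing an endpoint receive distinct colors. -/
def IsProperEdgeColoring {V : Type*} (G : SimpleGraph V) (c : Sym2 V → ℕ) : Prop :=
  ∀ e₁ ∈ G.edgeSet, ∀ e₂ ∈ G.edgeSet, e₁ ≠ e₂ → (∃ v, v ∈ e₁ ∧ v ∈ e₂) → c e₁ ≠ c e₂

/-- The palette of a vertex `v`: the set of colors appearing on edges of `G` incident with `v`. -/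
def palette {V : Type*} (G : SimpleGraph V) (c : Sym2 V → ℕ) (v : V) : Set ℕ :=
  {n | ∃ e ∈ G.edgeSet, v ∈ e ∧ c e = n}

/-- The palette index of `G`: the minimum number of distinct palettes occurring in a
proper edge coloring of `G`. -/
noncomputable def paletteIndex {V : Type*} (G : SimpleGraph V) : ℕ :=
  sInf {k | ∃ c : Sym2 V → ℕ, IsProperEdgeColoring G c ∧ (Set.range (palette G c)).ncard = k}

/-- `G` is `(a,b)`-biregular: bipartite with nonempty parts `(X, Y)` such that every
vertex in `X` has degree `a` and every vertex in `Y` has degree `b`. -/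
def IsBiregular {V : Type*} [Fintype V] (G : SimpleGraph V) [DecidableRel G.Adj] (a b : ℕ) : Prop :=
  ∃ X Y : Finset V, X.Nonempty ∧ Y.Nonempty ∧ Disjoint X Y ∧ (∀ v : V, v ∈ X ∨ v ∈ Y) ∧
    (∀ v w, G.Adj v w → (v ∈ X ∧ w ∈ Y) ∨ (v ∈ Y ∧ w ∈ X)) ∧
    (∀ v ∈ X, G.degree v = a) ∧ (∀ v ∈ Y, G.degree v = b)

/-!
Lower bound: the palette of a vertex of degree `2r + 1` is covered by the palettes of its
neighbours, which have two elements each, so there are at least `r + 1` palettes of the latter kind.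

Upper bound: the vertices of degree `2` are the edges of a `(2r + 1)`-regular multigraph on the
other part, each joining its two neighbours. Number the half-edges so that those at a common vertex
are consecutive, and pair up the numbers `2n` and `2n + 1`; by Hall's theorem the multigraph can be
oriented so that every pair consists of a tail and a head, whence all out- and in-degrees are `r` or
`r + 1`. Now peel off matchings `M₀, M₁, …, M₂ᵣ`: the sources of `M₀` are the vertices of out-degree
`r + 1`, the targets of `M₁` are those that `M₀` missed, the sources of `M₂` are those that `M₁`
missed, and so on. The two half-edges of an arc of `Mⱼ` receive the colors `j` and `j + 1`, the even
one at the tail, with `2r + 1` replaced by `0`. Every vertex of the multigraph then sees all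
`2r + 1` colors, so the only palettes are this full one and the `2r + 1` pairs of cyclically
consecutive colors.
-/

section Matching

theorem exists_matching_of_degree_le {ε V W : Type*} [DecidableEq V] [DecidableEq W]
    {E : Finset ε} {src : ε → V} {tgt : ε → W} {T : Finset V} {d : ℕ}
    (hd : 0 < d) (hsrc : ∀ v ∈ T, d ≤ #{e ∈ E | src e = v})
    (htgt : ∀ w, #{e ∈ E | tgt e = w} ≤ d) :
    ∃ M ⊆ E, Set.InjOn src M ∧ Set.InjOn tgt M ∧ M.image src = T := by
  classical
  let nbrs : T → Finset W := fun v => image tgt {e ∈ E | src e = v}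
  have hall : ∀ s : Finset T, #s ≤ #(s.biUnion nbrs) := by
    intro s
    refine Nat.le_of_mul_le_mul_right (?_ : #s * d ≤ #(s.biUnion nbrs) * d) hd
    calc #s * d
        ≤ ∑ v ∈ s, #{e ∈ E | src e = v} := card_nsmul_le_sum _ _ _ fun v _ => hsrc v v.2
      _ = #(s.biUnion fun v => {e ∈ E | src e = v}) := by
          refine (card_biUnion fun v _ w _ hvw => ?_).symm
          exact disjoint_filter.2 fun e _ hv hw => hvw (Subtype.ext (hv.symm.trans hw))
      _ ≤ #((s.biUnion nbrs).biUnion fun w => {e ∈ E | tgt e = w}) := by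
          refine card_le_card fun e he => ?_
          obtain ⟨v, hv, he⟩ := mem_biUnion.1 he
          exact mem_biUnion.2 ⟨tgt e, mem_biUnion.2 ⟨v, hv, mem_image_of_mem tgt he⟩,
            mem_filter.2 ⟨(mem_filter.1 he).1, rfl⟩⟩
      _ ≤ #(s.biUnion nbrs) * d := card_biUnion_le_card_mul _ _ _ fun w _ => htgt w
  obtain ⟨mate, mate_injective, mate_mem⟩ :=
    (all_card_le_biUnion_card_iff_exists_injective nbrs).1 hall
  have exists_edge : ∀ v : T, ∃ e ∈ E, src e = v ∧ tgt e = mate v := fun v => by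
    obtain ⟨e, he, hmate⟩ := mem_image.1 (mate_mem v)
    exact ⟨e, (mem_filter.1 he).1, (mem_filter.1 he).2, hmate⟩
  choose edge edge_mem src_edge tgt_edge using exists_edge
  refine ⟨univ.image edge, image_subset_iff.2 fun v _ => edge_mem v, ?_, ?_, ?_⟩
  · rw [coe_image, coe_univ, Set.image_univ]
    rintro _ ⟨v, rfl⟩ _ ⟨w, rfl⟩ h
    rw [src_edge, src_edge] at h
    rw [Subtype.ext h]
  · rw [coe_image, coe_univ, Set.image_univ]
    rintro _ ⟨v, rfl⟩ _ ⟨w, rfl⟩ h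
    rw [tgt_edge, tgt_edge] at h
    rw [mate_injective h]
  · rw [image_image, (funext src_edge : src ∘ edge = Subtype.val)]
    simp

variable {ε W : Type*} [DecidableEq W]

theorem card_filter_eq_of_injOn {M : Finset ε} {f : ε → W} (hf : Set.InjOn f M) (v : W) :
    #{e ∈ M | f e = v} = if v ∈ M.image f then 1 else 0 := by
  split_ifs with hv
  · obtain ⟨e, he, rfl⟩ := mem_image.1 hv
    refine card_eq_one.2 ⟨e, eq_singleton_iff_unique_mem.2 ⟨mem_filter.2 ⟨he, rfl⟩, ?_⟩⟩
    exact fun e' he' => hf (mem_filter.1 he').1 he (mem_filter.1 he').2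
  · exact card_eq_zero.2 (filter_eq_empty_iff.2 fun e he h => hv (mem_image.2 ⟨e, he, h⟩))

theorem card_filter_eq_card_filter_sdiff_add [DecidableEq ε] {E M : Finset ε} {f : ε → W}
    (hM : M ⊆ E) (hf : Set.InjOn f M) (v : W) :
    #{e ∈ E | f e = v} = #{e ∈ E \ M | f e = v} + if v ∈ M.image f then 1 else 0 := by
  rw [← card_filter_eq_of_injOn hf, ← card_union_of_disjoint
    (disjoint_filter_filter sdiff_disjoint), ← filter_union, sdiff_union_of_subset hM]

end Matching

section Orientation

theorem exists_numbering_consecutive_on_fibers {α β : Type*} [Fintype α] [Finite β]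
    [DecidableEq β] (f : α → β) :
    ∃ (num : α → ℕ) (start : β → ℕ), Function.Injective num ∧ (∀ a, num a < Fintype.card α) ∧
      ∀ a, start (f a) ≤ num a ∧ num a < start (f a) + #{a' | f a' = f a} := by
  have := Fintype.ofFinite β
  let index := Fintype.equivFin β
  let size : Fin (Fintype.card β) → ℕ := fun i => Fintype.card {a // index (f a) = i}
  let enum : α ≃ Fin (∑ i, size i) :=
    (Equiv.sigmaFiberEquiv (index ∘ f)).symm.trans
      ((Equiv.sigmaCongrRight fun i => Fintype.equivFin {a // index (f a) = i}).trans
        finSigmaFinEquiv)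
  have card_eq : ∑ i, size i = Fintype.card α := by simpa using (Fintype.card_congr enum).symm
  have size_eq (a : α) : size (index (f a)) = #{a' | f a' = f a} := by
    simp [size, Fintype.card_subtype]
  let start : β → ℕ := fun b =>
    ∑ i : Fin (index b).val, size (Fin.castLE (index b).isLt.le i)
  refine ⟨fun a => enum a, start, Fin.val_injective.comp enum.injective,
    fun a => card_eq ▸ (enum a).isLt, fun a => ?_⟩
  obtain ⟨k, hk⟩ : ∃ k : Fin (size (index (f a))), (enum a : ℕ) = start (f a) + k :=
    ⟨_, finSigmaFinEquiv_apply _⟩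
  have k_lt : (k : ℕ) < #{a' | f a' = f a} := size_eq a ▸ k.isLt
  simp only [hk]
  omega

theorem card_filter_div_two_eq_le_two {α : Type*} [Fintype α] {num : α → ℕ}
    (num_injective : Function.Injective num) (n : ℕ) : #{a | num a / 2 = n} ≤ 2 := by
  have hmaps : ∀ a ∈ ({a | num a / 2 = n} : Finset α), num a ∈ Ico (2 * n) (2 * n + 2) :=
    fun a ha => by
      have := (mem_filter.1 ha).2
      rw [mem_Ico]
      omega
  simpa using card_le_card_of_injOn num hmaps num_injective.injOn

-- Hall's theorem in the `2`-regular bipartite multigraph in which the half-edge `(x, b)` joins `x`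
-- to the block `num (x, b) / 2`.
theorem exists_transversal_of_consecutive_pairs {X : Type*} [Fintype X] {num : X × Bool → ℕ}
    (num_injective : Function.Injective num) (num_lt : ∀ a, num a < 2 * Fintype.card X) :
    ∃ σ : X → Bool, Function.Injective (fun x => num (x, σ x) / 2) ∧
      Function.Injective (fun x => num (x, !σ x) / 2) := by
  classical
  have two_le_card_edge (x : X) : 2 ≤ #{a : X × Bool | a.1 = x} := by
    have hsub : {(x, true), (x, false)} ⊆ ({a | a.1 = x} : Finset (X × Bool)) := by
      simp [insert_subset_iff]
    simpa using card_le_card hsub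
  obtain ⟨M, -, -, block_injOn, hM⟩ := exists_matching_of_degree_le two_pos
    (fun x (_ : x ∈ univ) => two_le_card_edge x) (card_filter_div_two_eq_le_two num_injective)
  have exists_mem (x : X) : ∃ b, (x, b) ∈ M := by
    obtain ⟨⟨_, b⟩, hb, rfl⟩ := mem_image.1 (hM ▸ mem_univ x)
    exact ⟨b, hb⟩
  choose σ hσ using exists_mem
  have block_injective : Function.Injective (fun x => num (x, σ x) / 2) := fun x x' h =>
    congrArg Prod.fst (block_injOn (hσ x) (hσ x') h)
  refine ⟨σ, block_injective, fun x x' h => ?_⟩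
  obtain ⟨z, -, hz⟩ := surjOn_of_injOn_of_card_le (s := univ) (t := range (Fintype.card X)) _
    (fun x _ => mem_range.2 (Nat.div_lt_of_lt_mul (num_lt (x, σ x)))) block_injective.injOn
    (by simp) (mem_range.2 (Nat.div_lt_of_lt_mul (num_lt (x, !σ x))))
  have num_tail_ne (w : X) : num (z, σ z) ≠ num (w, !σ w) := fun hw => by
    obtain ⟨rfl, hσ⟩ := Prod.ext_iff.1 (num_injective hw)
    simp at hσ
  have num_head_eq : num (x, !σ x) = num (x', !σ x') := by
    have := num_tail_ne x
    have := num_tail_ne x'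
    simp only at hz h
    omega
  exact congrArg Prod.fst (num_injective num_head_eq)

theorem card_le_half_add_one {ι : Type*} {s : Finset ι} {num : ι → ℕ} {start d : ℕ}
    (block_injOn : Set.InjOn (fun i => num i / 2) s)
    (hnum : ∀ i ∈ s, start ≤ num i ∧ num i < start + d) : #s ≤ d / 2 + 1 := by
  have hmaps : ∀ i ∈ s, num i / 2 ∈ Ico (start / 2) (start / 2 + (d / 2 + 1)) := fun i hi => by
    have := hnum i hi
    rw [mem_Ico]
    omega
  simpa using card_le_card_of_injOn _ hmaps block_injOn

theorem exists_balanced_orientation {X Y : Type*} [Fintype X] [Finite Y] [DecidableEq Y]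
    (e : X × Bool → Y) :
    ∃ σ : X → Bool, ∀ y, #{x | e (x, σ x) = y} ≤ #{a | e a = y} / 2 + 1 ∧
      #{x | e (x, !σ x) = y} ≤ #{a | e a = y} / 2 + 1 := by
  obtain ⟨num, start, num_injective, num_lt, hnum⟩ := exists_numbering_consecutive_on_fibers e
  obtain ⟨σ, tail_injective, head_injective⟩ := exists_transversal_of_consecutive_pairs
    num_injective fun a => by simpa [mul_comm] using num_lt a
  refine ⟨σ, fun y => ⟨?_, ?_⟩⟩
  · refine card_le_half_add_one (start := start y) tail_injective.injOn fun x hx => ?_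
    simpa only [(mem_filter.1 hx).2] using hnum (x, σ x)
  · refine card_le_half_add_one (start := start y) head_injective.injOn fun x hx => ?_
    simpa only [(mem_filter.1 hx).2] using hnum (x, !σ x)

theorem card_tails_add_card_heads {X Y : Type*} [Fintype X] [DecidableEq Y] (e : X × Bool → Y)
    (σ : X → Bool) (y : Y) :
    #{x | e (x, σ x) = y} + #{x | e (x, !σ x) = y} = #{a | e a = y} := by
  simp only [card_filter, Fintype.sum_prod_type, Fintype.sum_bool, ← sum_add_distrib]
  refine sum_congr rfl fun x _ => ?_
  cases σ x
  · exact add_comm _ _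
  · rfl

end Orientation

section ZigzagLabelling

variable {ε W : Type*} [DecidableEq W]

/-- The degree conditions under which the arcs `E` (with sources `src` and targets `tgt`) can be
split into `m` classes as in `IsZigzagLabelling`. -/
structure HasZigzagDegrees (E : Finset ε) (src tgt : ε → W) (T : Finset W) (m : ℕ) : Prop where
  le_src (v : W) : m + 2 * (if v ∈ T then 1 else 0) ≤ 2 * #{e ∈ E | src e = v} + 2
  src_le (v : W) : 2 * #{e ∈ E | src e = v} ≤ m + 2 * (if v ∈ T then 1 else 0)
  le_tgt (w : W) : m ≤ 2 * #{e ∈ E | tgt e = w} + 1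
  tgt_le (w : W) : 2 * #{e ∈ E | tgt e = w} ≤ m + 1

/-- A labelling `h` of the arcs `E` by `0, …, m - 1` such that the arcs leaving a vertex have labels
in distinct blocks `{0}, {1, 2}, {3, 4}, …`, the arcs entering a vertex have labels in distinct
blocks `{0, 1}, {2, 3}, …`, the label `0` only occurs on arcs leaving `T`, and the label `m - 1`,
whose block is cut short on one of the two sides, only occurs at vertices whose degree on that side
is as large as `HasZigzagDegrees` permits. -/
structure IsZigzagLabelling (E : Finset ε) (src tgt : ε → W) (T : Finset W) (m : ℕ) (h : ε → ℕ) :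
    Prop where
  lt : ∀ e ∈ E, h e < m
  src_inj : ∀ e ∈ E, ∀ e' ∈ E, src e = src e' → (h e + 1) / 2 = (h e' + 1) / 2 → e = e'
  tgt_inj : ∀ e ∈ E, ∀ e' ∈ E, tgt e = tgt e' → h e / 2 = h e' / 2 → e = e'
  src_mem : ∀ e ∈ E, h e = 0 → src e ∈ T
  le_src_of_last : ∀ e ∈ E, h e + 1 = m → Even m →
    m + 2 * (if src e ∈ T then 1 else 0) ≤ 2 * #{e' ∈ E | src e' = src e}
  le_tgt_of_last : ∀ e ∈ E, h e + 1 = m → Odd m → m + 1 ≤ 2 * #{e' ∈ E | tgt e' = tgt e}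

variable {E M : Finset ε} {src tgt : ε → W} {T : Finset W} {m : ℕ}

theorem HasZigzagDegrees.exists_matching (hE : HasZigzagDegrees E src tgt T (m + 1)) :
    ∃ M ⊆ E, Set.InjOn src M ∧ Set.InjOn tgt M ∧ M.image src = T := by
  refine exists_matching_of_degree_le (d := (m + 2) / 2) (by omega) (fun v hv => ?_) fun w => ?_
  · have := hE.le_src v
    rw [if_pos hv] at this
    omega
  · have := hE.tgt_le w
    omega

theorem HasZigzagDegrees.sdiff [DecidableEq ε] [Fintype W]
    (hE : HasZigzagDegrees E src tgt (M.image src) (m + 1)) (hM : M ⊆ E)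
    (src_injOn : Set.InjOn src M) (tgt_injOn : Set.InjOn tgt M) :
    HasZigzagDegrees (E \ M) tgt src (M.image tgt)ᶜ m := by
  have card_src := card_filter_eq_card_filter_sdiff_add hM src_injOn
  have card_tgt := card_filter_eq_card_filter_sdiff_add hM tgt_injOn
  have indicator_compl (w : W) :
      (if w ∈ (M.image tgt)ᶜ then 1 else 0) + (if w ∈ M.image tgt then 1 else 0) = 1 := by
    simp only [mem_compl]
    split_ifs <;> rfl
  exact
    { le_src := fun w => by linarith [hE.le_tgt w, card_tgt w, indicator_compl w]
      src_le := fun w => by linarith [hE.tgt_le w, card_tgt w, indicator_compl w]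
      le_tgt := fun v => by linarith [hE.le_src v, card_src v]
      tgt_le := fun v => by linarith [hE.src_le v, card_src v] }

-- Shifting the labels by one turns the blocks `{0, 1}, {2, 3}, …` of the swapped labelling into
-- `{1, 2}, {3, 4}, …` and its blocks `{0}, {1, 2}, …` into `{1}, {2, 3}, …`; here `{1}` can be
-- completed to `{0, 1}` because the old label `0` avoids the targets of `M`.
theorem IsZigzagLabelling.of_sdiff [DecidableEq ε] [Fintype W] {h : ε → ℕ} (hM : M ⊆ E)
    (src_injOn : Set.InjOn src M) (tgt_injOn : Set.InjOn tgt M)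
    (hh : IsZigzagLabelling (E \ M) tgt src (M.image tgt)ᶜ m h) :
    IsZigzagLabelling E src tgt (M.image src) (m + 1)
      (fun e => if e ∈ M then 0 else h e + 1) where
  lt e he := by
    have := hh.lt e
    grind
  src_inj e he e' he' hsrc hblock := by
    have := hh.tgt_inj e
    grind [Set.InjOn]
  tgt_inj e he e' he' htgt hblock := by
    have := hh.src_mem e
    have := hh.src_mem e'
    have := hh.src_inj e
    grind [Set.InjOn, mem_compl]
  src_mem e _ hzero := by grind
  le_src_of_last e he hlast hm := by
    have := hh.le_tgt_of_last e
    have := card_filter_eq_card_filter_sdiff_add hM src_injOn (src e)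
    grind
  le_tgt_of_last e he hlast hm := by
    have := hh.le_src_of_last e
    have := card_filter_eq_card_filter_sdiff_add hM tgt_injOn (tgt e)
    have : 0 < #{e' ∈ E | tgt e' = tgt e} := card_pos.2 ⟨e, mem_filter.2 ⟨he, rfl⟩⟩
    grind [mem_compl]

theorem HasZigzagDegrees.exists_labelling [Finite W] (hE : HasZigzagDegrees E src tgt T m) :
    ∃ h, IsZigzagLabelling E src tgt T m h := by
  classical
  have := Fintype.ofFinite W
  induction m generalizing E src tgt T with
  | zero =>
    have not_mem (e : ε) : e ∉ E := fun he => by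
      have : 0 < #{e' ∈ E | tgt e' = tgt e} := card_pos.2 ⟨e, mem_filter.2 ⟨he, rfl⟩⟩
      have := hE.tgt_le (tgt e)
      omega
    exact ⟨fun _ => 0, by constructor <;> simp [not_mem]⟩
  | succ m ih =>
    obtain ⟨M, hM, src_injOn, tgt_injOn, rfl⟩ := hE.exists_matching
    obtain ⟨h, hh⟩ := ih (hE.sdiff hM src_injOn tgt_injOn)
    exact ⟨_, hh.of_sdiff hM src_injOn tgt_injOn⟩

end ZigzagLabelling

section HalfEdgeColoring

/-- The successor of the color `j` on the cycle `0, 1, …, 2 * r, 0`. -/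
def nextColor (r j : ℕ) : ℕ := if j = 2 * r then 0 else j + 1

theorem nextColor_ne {r : ℕ} (hr : 1 ≤ r) (j : ℕ) : nextColor r j ≠ j := by
  grind [nextColor]

theorem nextColor_lt {r j : ℕ} (hj : j < 2 * r + 1) : nextColor r j < 2 * r + 1 := by
  grind [nextColor]

theorem exists_arc_coloring {X Y : Type*} [Fintype X] [Finite Y] [DecidableEq Y] {r : ℕ}
    {src tgt : X → Y} (hsrc : ∀ y, #{x | src x = y} ≤ r + 1) (htgt : ∀ y, #{x | tgt x = y} ≤ r + 1)
    (hdeg : ∀ y, #{x | src x = y} + #{x | tgt x = y} = 2 * r + 1) :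
    ∃ s t : X → ℕ, (∀ x x', src x = src x' → s x = s x' → x = x') ∧
      (∀ x x', tgt x = tgt x' → t x = t x' → x = x') ∧ (∀ x x', src x = tgt x' → s x ≠ t x') ∧
      ∀ x, ∃ j < 2 * r + 1, ({s x, t x} : Set ℕ) = {j, nextColor r j} := by
  classical
  have := Fintype.ofFinite Y
  have hE : HasZigzagDegrees univ src tgt {y | #{x | src x = y} = r + 1} (2 * r + 1) := by
    constructor <;> intro y <;> have := hsrc y <;> have := htgt y <;> have := hdeg y <;> grind
  obtain ⟨h, hh⟩ := hE.exists_labelling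
  have h_lt (x : X) : h x < 2 * r + 1 := hh.lt x (mem_univ x)
  refine ⟨fun x => if Even (h x) then h x else nextColor r (h x),
    fun x => if Even (h x) then nextColor r (h x) else h x, ?_, ?_, ?_, ?_⟩
  · intro x x' hxx' hs
    refine hh.src_inj x (mem_univ x) x' (mem_univ x') hxx' ?_
    grind [nextColor]
  · intro x x' hxx' ht
    refine hh.tgt_inj x (mem_univ x) x' (mem_univ x') hxx' ?_
    grind [nextColor]
  · intro x x' hxx' hst
    -- All tails have even colors, and all heads odd ones except for the color `0` of label `2 * r`.
    have hzero : h x = 0 ∧ h x' = 2 * r := by grind [nextColor]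
    have out_eq := (mem_filter.1 (hh.src_mem x (mem_univ x) hzero.1)).2
    have le_in := hh.le_tgt_of_last x' (mem_univ x') (by omega) ⟨r, rfl⟩
    have := hdeg (src x)
    rw [← hxx'] at le_in
    omega
  · refine fun x => ⟨h x, h_lt x, ?_⟩
    dsimp only
    split_ifs
    · rfl
    · exact Set.pair_comm _ _

theorem exists_halfEdge_coloring {X Y : Type*} [Fintype X] [Finite Y] [DecidableEq Y] {r : ℕ}
    {e : X × Bool → Y} (hdeg : ∀ y, #{a | e a = y} = 2 * r + 1) :
    ∃ c : X × Bool → ℕ, (∀ a b, e a = e b → c a = c b → a = b) ∧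
      ∀ x, ∃ j < 2 * r + 1, ({c (x, true), c (x, false)} : Set ℕ) = {j, nextColor r j} := by
  obtain ⟨σ, hσ⟩ := exists_balanced_orientation e
  have half_eq : (2 * r + 1) / 2 + 1 = r + 1 := by omega
  simp only [hdeg, half_eq] at hσ
  obtain ⟨s, t, s_inj, t_inj, s_ne_t, hst⟩ := exists_arc_coloring (fun y => (hσ y).1)
    (fun y => (hσ y).2) fun y => (card_tails_add_card_heads e σ y).trans (hdeg y)
  let c : X × Bool → ℕ := fun a => if a.2 = σ a.1 then s a.1 else t a.1
  have c_tail (x : X) : c (x, σ x) = s x := if_pos rfl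
  have c_head (x : X) : c (x, !σ x) = t x := if_neg (Bool.not_ne_self _)
  have tail_or_head (x : X) (b : Bool) : b = σ x ∨ b = !σ x := by cases b <;> cases σ x <;> simp
  refine ⟨c, ?_, fun x => ?_⟩
  · rintro ⟨x, b⟩ ⟨x', b'⟩ hab hc
    rcases tail_or_head x b with rfl | rfl <;> rcases tail_or_head x' b' with rfl | rfl <;>
      simp only [c_tail, c_head] at hc
    · rw [s_inj x x' hab hc]
    · exact absurd hc (s_ne_t x x' hab)
    · exact absurd hc.symm (s_ne_t x' x hab.symm)
    · rw [t_inj x x' hab hc]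
  · obtain ⟨j, hj, hpair⟩ := hst x
    refine ⟨j, hj, hpair ▸ ?_⟩
    rw [← c_tail, ← c_head]
    cases σ x
    · exact Set.pair_comm _ _
    · rfl

theorem image_eq_Iio_card {α : Type*} {s : Finset α} {c : α → ℕ} (hinj : Set.InjOn c s)
    (hlt : ∀ a ∈ s, c a < #s) : c '' s = Set.Iio #s := by
  refine Set.eq_of_subset_of_ncard_le (Set.image_subset_iff.2 hlt) ?_ (Set.finite_Iio _)
  simp [hinj.ncard_image]

theorem image_fiber_eq_Iio {X Y : Type*} [Fintype X] [DecidableEq Y] {r : ℕ} {e : X × Bool → Y}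
    {c : X × Bool → ℕ} {y : Y} (hdeg : #{a | e a = y} = 2 * r + 1)
    (c_inj : ∀ a b, e a = e b → c a = c b → a = b)
    (hpair : ∀ x, ∃ j < 2 * r + 1, ({c (x, true), c (x, false)} : Set ℕ) = {j, nextColor r j}) :
    c '' {a | e a = y} = Set.Iio (2 * r + 1) := by
  have c_lt (a : X × Bool) : c a < 2 * r + 1 := by
    obtain ⟨j, hj, hj'⟩ := hpair a.1
    have := nextColor_lt hj
    rcases a with ⟨x, _ | _⟩ <;> grind [Set.pair_eq_pair_iff]
  rw [← hdeg, ← image_eq_Iio_card (c := c)]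
  · simp
  · exact fun a ha b hb => c_inj a b ((mem_filter.1 ha).2.trans (mem_filter.1 hb).2.symm)
  · exact fun a _ => hdeg ▸ c_lt a

theorem eq_of_fst_eq_of_apply_eq {X β : Type*} {c : X × Bool → β}
    (c_ne : ∀ x, c (x, true) ≠ c (x, false)) {a b : X × Bool} (hfst : a.1 = b.1)
    (hc : c a = c b) : a = b := by
  obtain ⟨x, i⟩ := a
  obtain ⟨_, j⟩ := b
  obtain rfl : x = _ := hfst
  have := c_ne x
  cases i <;> cases j <;> simp_all

end HalfEdgeColoring

section Palette

variable {V : Type*} {G : SimpleGraph V} {c : Sym2 V → ℕ}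

theorem palette_eq_image_neighborSet (G : SimpleGraph V) (c : Sym2 V → ℕ) (v : V) :
    palette G c v = (fun w => c s(v, w)) '' G.neighborSet v := by
  ext n
  constructor
  · rintro ⟨e, he, hv, rfl⟩
    obtain ⟨w, rfl⟩ := Sym2.mem_iff_exists.1 hv
    exact ⟨w, he, rfl⟩
  · rintro ⟨w, hw, rfl⟩
    exact ⟨s(v, w), hw, Sym2.mem_mk_left v w, rfl⟩

theorem finite_palette (G : SimpleGraph V) (c : Sym2 V → ℕ) (v : V) [Finite (G.neighborSet v)] :
    (palette G c v).Finite := by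
  rw [palette_eq_image_neighborSet]
  exact Set.toFinite _

theorem IsProperEdgeColoring.ncard_palette (hc : IsProperEdgeColoring G c) (v : V)
    [Fintype (G.neighborSet v)] : (palette G c v).ncard = G.degree v := by
  rw [palette_eq_image_neighborSet, Set.InjOn.ncard_image, Set.ncard_eq_toFinset_card',
    ← neighborFinset_def, card_neighborFinset_eq_degree]
  intro w hw w' hw' hcolor
  by_contra hne
  exact hc s(v, w) hw s(v, w') hw' (fun h => hne (Sym2.congr_right.1 h))
    ⟨v, Sym2.mem_mk_left v w, Sym2.mem_mk_left v w'⟩ hcolor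

theorem paletteIndex_le (hc : IsProperEdgeColoring G c) :
    paletteIndex G ≤ (Set.range (palette G c)).ncard :=
  Nat.sInf_le ⟨c, hc, rfl⟩

theorem exists_isProperEdgeColoring [Countable V] (G : SimpleGraph V) :
    ∃ c, IsProperEdgeColoring G c := by
  have : Countable (Sym2 V) := Quotient.countable
  obtain ⟨c, c_injective⟩ := exists_injective_nat (Sym2 V)
  exact ⟨c, fun _ _ _ _ hne _ => c_injective.ne hne⟩

theorem le_paletteIndex [Countable V] {k : ℕ}
    (hk : ∀ c, IsProperEdgeColoring G c → k ≤ (Set.range (palette G c)).ncard) :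
    k ≤ paletteIndex G := by
  obtain ⟨c, hc⟩ := exists_isProperEdgeColoring G
  obtain ⟨c', hc', hindex⟩ := Nat.sInf_mem (⟨_, c, hc, rfl⟩ : Set.Nonempty
    {k | ∃ c, IsProperEdgeColoring G c ∧ (Set.range (palette G c)).ncard = k})
  exact (hk c' hc').trans_eq hindex

theorem IsBiregular.add_le_mul_ncard_range_palette [Fintype V] [DecidableRel G.Adj] {a b : ℕ}
    (hG : IsBiregular G a b) (hab : a ≠ b) (hc : IsProperEdgeColoring G c) :
    b + a ≤ a * (Set.range (palette G c)).ncard := by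
  classical
  obtain ⟨X, Y, -, ⟨y, hy⟩, hXY, -, hadj, hX, hY⟩ := hG
  let P : Finset (Set ℕ) := X.image (palette G c)
  have ncard_of_mem : ∀ p ∈ P, p.ncard = a := forall_mem_image.2 fun x hx =>
    (hc.ncard_palette x).trans (hX x hx)
  have finite_of_mem : ∀ p ∈ P, p.Finite := forall_mem_image.2 fun x _ => finite_palette G c x
  have ncard_y : (palette G c y).ncard = b := (hc.ncard_palette y).trans (hY y hy)
  have not_mem : palette G c y ∉ P := fun h => hab ((ncard_of_mem _ h).symm.trans ncard_y)
  have card_succ_le : #P + 1 ≤ (Set.range (palette G c)).ncard := by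
    rw [← card_insert_of_notMem not_mem, ← Set.ncard_coe_finset]
    refine Set.ncard_le_ncard ?_ (Set.finite_range _)
    simp [P, Set.insert_subset_iff, Set.image_subset_iff]
  have subset_biUnion : palette G c y ⊆ ⋃ p ∈ P, p := by
    rintro n ⟨e, he, hye, rfl⟩
    obtain ⟨x, rfl⟩ := Sym2.mem_iff_exists.1 hye
    have hx : x ∈ X := (hadj y x he).elim (fun h => absurd hy (disjoint_left.1 hXY h.1)) And.right
    exact Set.mem_biUnion (mem_image_of_mem _ hx) ⟨s(y, x), he, Sym2.mem_mk_right y x, rfl⟩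
  have le_mul : b ≤ a * #P := by
    calc b = (palette G c y).ncard := ncard_y.symm
      _ ≤ (⋃ p ∈ P, p).ncard :=
          Set.ncard_le_ncard subset_biUnion (P.finite_toSet.biUnion finite_of_mem)
      _ ≤ ∑ p ∈ P, p.ncard := set_ncard_biUnion_le P id
      _ = a * #P := by rw [sum_congr rfl ncard_of_mem, sum_const, smul_eq_mul, mul_comm]
  calc b + a ≤ a * (#P + 1) := by linarith
    _ ≤ a * (Set.range (palette G c)).ncard := Nat.mul_le_mul_left a card_succ_le

end Palette

section EdgeEnumeration

variable {V : Type*} {G : SimpleGraph V} {α : Type*} {edge : α → Sym2 V}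

theorem isProperEdgeColoring_extend (edge_injective : Function.Injective edge)
    (range_edge : Set.range edge = G.edgeSet) {c : α → ℕ}
    (hc : ∀ a b v, v ∈ edge a → v ∈ edge b → c a = c b → a = b) :
    IsProperEdgeColoring G (Function.extend edge c 0) := by
  rw [IsProperEdgeColoring, ← range_edge]
  rintro _ ⟨a, rfl⟩ _ ⟨b, rfl⟩ hne ⟨v, hva, hvb⟩ hcolor
  rw [edge_injective.extend_apply, edge_injective.extend_apply] at hcolor
  exact hne (congrArg edge (hc a b v hva hvb hcolor))

theorem palette_extend (edge_injective : Function.Injective edge)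
    (range_edge : Set.range edge = G.edgeSet) (c : α → ℕ) (v : V) :
    palette G (Function.extend edge c 0) v = c '' {a | v ∈ edge a} := by
  ext n
  simp only [palette, ← range_edge, Set.exists_range_iff, edge_injective.extend_apply,
    Set.mem_ofPred_eq, Set.mem_image]

theorem card_filter_mem_eq_degree [Fintype α] [DecidableEq V]
    (edge_injective : Function.Injective edge) (range_edge : Set.range edge = G.edgeSet) (v : V)
    [Fintype (G.neighborSet v)] :
    #{a | v ∈ edge a} = G.degree v := by
  rw [← card_incidenceFinset_eq_degree, ← card_image_of_injective _ edge_injective]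
  congr 1
  ext e
  simp only [mem_image, mem_filter_univ, mem_incidenceFinset, incidenceSet, ← range_edge]
  grind

variable {ι : Type*} {X Y : Finset V}

/-- The edge of a bipartite graph with parts `X` and `Y` that the vertex `a.1` of `X` sends, as
its `a.2`-th edge, to the vertex `e a` of `Y`. -/
def halfEdge (e : X × ι → Y) (a : X × ι) : Sym2 V := s(a.1, e a)

theorem left_mem_halfEdge (hXY : Disjoint X Y) {e : X × ι → Y} {x : X} {a : X × ι} :
    (x : V) ∈ halfEdge e a ↔ a.1 = x := by
  have : (x : V) ≠ e a := disjoint_iff_ne.1 hXY x x.2 (e a) (e a).2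
  simp only [halfEdge, Sym2.mem_iff, this, or_false, Subtype.ext_iff, eq_comm]

theorem right_mem_halfEdge (hXY : Disjoint X Y) {e : X × ι → Y} {y : Y} {a : X × ι} :
    (y : V) ∈ halfEdge e a ↔ e a = y := by
  have : (y : V) ≠ a.1 := (disjoint_iff_ne.1 hXY a.1 a.1.2 y y.2).symm
  simp only [halfEdge, Sym2.mem_iff, this, false_or, Subtype.ext_iff, eq_comm]

theorem IsBiregular.exists_halfEdge_enumeration [Fintype V] [DecidableEq V] [DecidableRel G.Adj]
    [Fintype ι] {b : ℕ} (hG : IsBiregular G (Fintype.card ι) b) :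
    ∃ (X Y : Finset V) (e : X × ι → Y), Disjoint X Y ∧ (∀ v, v ∈ X ∨ v ∈ Y) ∧
      Function.Injective (halfEdge e) ∧ Set.range (halfEdge e) = G.edgeSet ∧
      ∀ y, #{a | e a = y} = b := by
  obtain ⟨X, Y, -, -, hXY, hcover, hadj, hX, hY⟩ := hG
  let nbr (x : X) : ι ≃ G.neighborSet x :=
    Fintype.equivOfCardEq ((hX x x.2).symm.trans (G.card_neighborSet_eq_degree x).symm)
  have nbr_mem (x : X) (i : ι) : (nbr x i : V) ∈ Y :=
    (hadj x _ (nbr x i).2).elim And.right fun h => absurd h.1 (disjoint_left.1 hXY x.2)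
  let e : X × ι → Y := fun a => ⟨nbr a.1 a.2, nbr_mem a.1 a.2⟩
  have edge_injective : Function.Injective (halfEdge e) := by
    rintro ⟨x, i⟩ ⟨x', i'⟩ h
    obtain rfl : x' = x := (left_mem_halfEdge hXY).1 (h ▸ (left_mem_halfEdge hXY).2 rfl)
    exact congrArg (x', ·) ((nbr x').injective (Subtype.ext (Sym2.congr_right.1 h)))
  have range_edge : Set.range (halfEdge e) = G.edgeSet := by
    refine Set.Subset.antisymm (Set.range_subset_iff.2 fun a => (nbr a.1 a.2).2) ?_
    have mem_range (x : X) (w : V) (h : G.Adj x w) : s(↑x, w) ∈ Set.range (halfEdge e) :=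
      ⟨(x, (nbr x).symm ⟨w, h⟩), by simp [halfEdge, e]⟩
    refine Sym2.ind fun v w h => ?_
    rcases hadj v w h with ⟨hv, -⟩ | ⟨-, hw⟩
    · exact mem_range ⟨v, hv⟩ w h
    · rw [Sym2.eq_swap]
      exact mem_range ⟨w, hw⟩ v (G.adj_symm h)
  refine ⟨X, Y, e, hXY, hcover, edge_injective, range_edge, fun y => ?_⟩
  rw [← hY y y.2, ← card_filter_mem_eq_degree edge_injective range_edge]
  simp only [right_mem_halfEdge hXY]

end EdgeEnumeration

section UpperBound

theorem ncard_range_le_succ {V β : Type*} {p : V → β} {q : β} {f : ℕ → β} {n : ℕ}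
    (hp : ∀ v, p v = q ∨ ∃ j < n, p v = f j) : (Set.range p).ncard ≤ n + 1 := by
  have hsub : Set.range p ⊆ insert q (f '' Set.Iio n) := by
    rintro _ ⟨v, rfl⟩
    simpa [eq_comm] using hp v
  calc (Set.range p).ncard
      ≤ (insert q (f '' Set.Iio n)).ncard := Set.ncard_le_ncard hsub
    _ ≤ (f '' Set.Iio n).ncard + 1 := Set.ncard_insert_le _ _
    _ ≤ n + 1 := by simpa using Set.ncard_image_le (f := f) (Set.finite_Iio n)

theorem image_setOf_fst_eq {X β : Type*} (c : X × Bool → β) (x : X) :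
    c '' {a | a.1 = x} = {c (x, true), c (x, false)} := by
  ext n
  simp [eq_comm, or_comm]

theorem IsBiregular.exists_ncard_range_palette_le {V : Type*} [Fintype V] {G : SimpleGraph V}
    [DecidableRel G.Adj] {r : ℕ} (hr : 1 ≤ r) (hG : IsBiregular G 2 (2 * r + 1)) :
    ∃ c, IsProperEdgeColoring G c ∧ (Set.range (palette G c)).ncard ≤ 2 * r + 2 := by
  classical
  obtain ⟨X, Y, e, hXY, hcover, edge_injective, range_edge, hdeg⟩ :=
    hG.exists_halfEdge_enumeration (ι := Bool)
  obtain ⟨c, c_inj, hpair⟩ := exists_halfEdge_coloring hdeg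
  have c_ne (x : X) : c (x, true) ≠ c (x, false) := by
    obtain ⟨j, -, hj⟩ := hpair x
    have := nextColor_ne hr j
    grind [Set.pair_eq_pair_iff]
  refine ⟨Function.extend (halfEdge e) c 0,
    isProperEdgeColoring_extend edge_injective range_edge fun a b v ha hb hab => ?_,
    ncard_range_le_succ (q := Set.Iio (2 * r + 1)) (f := fun j => {j, nextColor r j}) fun v => ?_⟩
  · rcases hcover v with hv | hv
    · lift v to X using hv
      rw [left_mem_halfEdge hXY] at ha hb
      exact eq_of_fst_eq_of_apply_eq c_ne (ha.trans hb.symm) hab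
    · lift v to Y using hv
      rw [right_mem_halfEdge hXY] at ha hb
      exact c_inj a b (ha.trans hb.symm) hab
  · rw [palette_extend edge_injective range_edge]
    rcases hcover v with hv | hv
    · lift v to X using hv
      simp only [left_mem_halfEdge hXY, image_setOf_fst_eq]
      exact Or.inr (hpair v)
    · lift v to Y using hv
      simp only [right_mem_halfEdge hXY]
      exact Or.inl (image_fiber_eq_Iio (hdeg v) c_inj hpair)

end UpperBound

/-- If `G` is a `(2,2r+1)`-biregular graph, then `r + 2 ≤ š(G) ≤ 2r + 2`. -/
theorem palette_index_two_odd_biregular {V : Type*} [Fintype V]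
    (G : SimpleGraph V) [DecidableRel G.Adj] (r : ℕ) (hr : 1 ≤ r)
    (hG : IsBiregular G 2 (2 * r + 1)) :
    r + 2 ≤ paletteIndex G ∧ paletteIndex G ≤ 2 * r + 2 := by
  refine ⟨le_paletteIndex fun c hc => ?_, ?_⟩
  · have := hG.add_le_mul_ncard_range_palette (by omega) hc
    omega
  · obtain ⟨c, hc, hcard⟩ := hG.exists_ncard_range_palette_le hr
    exact (paletteIndex_le hc).trans hcard
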